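/- Let J_1, …, J_p be pairwise disjoint subsets of {1,…,n} and let θ be a smooth function on ℝ^n. Then for every smooth f : ℝ^n → ℝ, (L_{J_1}∘L_{J_2}∘⋯∘L_{J_p})(θ·f) − θ·(L_{J_1}∘⋯∘L_{J_p})(f) = Σ (∂_{K_1∪K_2∪⋯∪K_p} θ) · (L_{J_1∖K_1}∘L_{J_2∖K_2}∘⋯∘L_{J_p∖K_p})(f), where the sum is over all choices of subsets K_i ⊆ J_i (i = 1,…,p) that are not all empty. -/

import Mathlib

/-!
The operator `Λ = L_{J_1} ∘ ⋯ ∘ L_{J_p}` satisfies a Leibniz rule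
`Λ(θ f) = Σ_{K_i ⊆ J_i} ∂_{K_1 ∪ ⋯ ∪ K_p} θ · (L_{J_1∖K_1} ∘ ⋯ ∘ L_{J_p∖K_p}) f`
(`foldr_Lop_mul`), and the theorem isolates its term with all `K_i` empty.

For `p = 1` (`Lop_mul`) this follows from the Leibniz rule
`∂_S(θ f) = Σ_{K ⊆ S} ∂_K θ · ∂_{S∖K} f` (`pdSet_mul`) by exchanging the sums over `K ⊆ S ⊆ J`
and writing `S = K ⊔ T` with `T ⊆ J∖K`, since then `J∖S = (J∖K)∖T`. In general, one applies
`L_{J_1}` to the formula for `L_{J_2} ∘ ⋯ ∘ L_{J_p}`, using linearity (`Lop_sum`), the case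
`p = 1` with `θ` replaced by `∂_{K_2 ∪ ⋯ ∪ K_p} θ`, and `∂_{K} ∂_{K'} = ∂_{K ∪ K'}` for disjoint
`K`, `K'` (`pdSet_union`), which is where disjointness of the `J_i` enters. These facts rely
on differentiability of the functions involved, so smoothness is carried along throughout.
-/

/-- The `i`-th partial derivative of a function on `ℝⁿ`. -/
noncomputable def pd {n : ℕ} (i : Fin n) (f : (Fin n → ℝ) → ℝ) : (Fin n → ℝ) → ℝ :=
  fun x => fderiv ℝ f x (Pi.single i 1)

/-- The composite partial derivative `∂_J = ∏_{i ∈ J} ∂_i` over a subset `J`. -/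
noncomputable def pdSet {n : ℕ} (J : Finset (Fin n)) (f : (Fin n → ℝ) → ℝ) :
    (Fin n → ℝ) → ℝ :=
  (J.sort (· ≤ ·)).foldr pd f

/-- The operator `L_J f = Σ_{K ⊆ J} a_{J∖K} · ∂_K f`. -/
noncomputable def Lop {n : ℕ} (a : Finset (Fin n) → (Fin n → ℝ) → ℝ)
    (J : Finset (Fin n)) (f : (Fin n → ℝ) → ℝ) : (Fin n → ℝ) → ℝ :=
  fun x => ∑ K ∈ J.powerset, a (J \ K) x * pdSet K f x

/-! ### Partial derivatives of smooth functions -/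

theorem pd_smooth {n : ℕ} (i : Fin n) {f : (Fin n → ℝ) → ℝ} (hf : ContDiff ℝ (⊤ : ℕ∞) f) :
    ContDiff ℝ (⊤ : ℕ∞) (pd i f) :=
  (hf.fderiv_right (m := ((⊤ : ℕ∞) : WithTop ℕ∞)) (by exact_mod_cast le_top)).clm_apply
    contDiff_const

theorem smooth_differentiable {n : ℕ} {f : (Fin n → ℝ) → ℝ} (hf : ContDiff ℝ (⊤ : ℕ∞) f) :
    Differentiable ℝ f :=
  hf.differentiable (by simp)

theorem pd_comm {n : ℕ} (i j : Fin n) {f : (Fin n → ℝ) → ℝ} (hf : ContDiff ℝ (⊤ : ℕ∞) f) :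
    pd i (pd j f) = pd j (pd i f) := by
  have hd : Differentiable ℝ (fderiv ℝ f) :=
    (hf.fderiv_right (m := ((⊤ : ℕ∞) : WithTop ℕ∞)) (by exact_mod_cast le_top)).differentiable
      (by simp)
  have key : ∀ (k l : Fin n) (x : Fin n → ℝ), pd k (pd l f) x =
      fderiv ℝ (fderiv ℝ f) x (Pi.single k 1) (Pi.single l 1) := by
    intro k l x
    unfold pd
    rw [fderiv_clm_apply (hd x) (differentiableAt_const _)]
    simp
  funext x
  rw [key, key]
  have hs : IsSymmSndFDerivAt ℝ f x := hf.contDiffAt.isSymmSndFDerivAt (by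
    simp only [minSmoothness_of_isRCLikeNormedField]
    exact WithTop.coe_le_coe.2 (le_top : (2 : ℕ∞) ≤ ⊤))
  exact hs _ _

theorem pd_mul {n : ℕ} (i : Fin n) {f g : (Fin n → ℝ) → ℝ} (hf : ContDiff ℝ (⊤ : ℕ∞) f)
    (hg : ContDiff ℝ (⊤ : ℕ∞) g) :
    pd i (fun y => f y * g y) = fun y => f y * pd i g y + pd i f y * g y := by
  funext x
  unfold pd
  rw [fderiv_fun_mul (smooth_differentiable hf x) (smooth_differentiable hg x)]
  simp [mul_comm]

theorem pd_sum {n : ℕ} (i : Fin n) {ι : Type*} (s : Finset ι) (g : ι → (Fin n → ℝ) → ℝ)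
    (hg : ∀ k ∈ s, ContDiff ℝ (⊤ : ℕ∞) (g k)) :
    pd i (fun y => ∑ k ∈ s, g k y) = fun y => ∑ k ∈ s, pd i (g k) y := by
  funext x
  unfold pd
  rw [fderiv_fun_sum fun k hk => smooth_differentiable (hg k hk) x]
  simp

theorem foldr_pd_smooth {n : ℕ} (l : List (Fin n)) {f : (Fin n → ℝ) → ℝ}
    (hf : ContDiff ℝ (⊤ : ℕ∞) f) : ContDiff ℝ (⊤ : ℕ∞) (l.foldr pd f) := by
  induction l with
  | nil => exact hf
  | cons i l ih => exact pd_smooth i ih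

theorem foldr_pd_perm {n : ℕ} {l₁ l₂ : List (Fin n)} (h : l₁.Perm l₂) {f : (Fin n → ℝ) → ℝ}
    (hf : ContDiff ℝ (⊤ : ℕ∞) f) : l₁.foldr pd f = l₂.foldr pd f := by
  induction h with
  | nil => rfl
  | cons i _ ih => exact congrArg (pd i) ih
  | swap i j l => exact pd_comm _ _ (foldr_pd_smooth l hf)
  | trans _ _ h₁ h₂ => exact h₁.trans h₂

theorem pdSet_smooth {n : ℕ} (J : Finset (Fin n)) {f : (Fin n → ℝ) → ℝ}
    (hf : ContDiff ℝ (⊤ : ℕ∞) f) : ContDiff ℝ (⊤ : ℕ∞) (pdSet J f) :=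
  foldr_pd_smooth _ hf

theorem pdSet_empty {n : ℕ} (f : (Fin n → ℝ) → ℝ) : pdSet ∅ f = f := by
  simp [pdSet]

/-- Adjoining an index applies one more derivative; commutativity of partial derivatives makes
the position of the new index in the sorted list irrelevant. -/
theorem pdSet_insert {n : ℕ} {i : Fin n} {J : Finset (Fin n)} (hi : i ∉ J)
    {f : (Fin n → ℝ) → ℝ} (hf : ContDiff ℝ (⊤ : ℕ∞) f) :
    pdSet (insert i J) f = pd i (pdSet J f) := by
  have hp : ((insert i J).sort (· ≤ ·)).Perm (i :: J.sort (· ≤ ·)) := by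
    rw [← Multiset.coe_eq_coe, ← Multiset.cons_coe, Finset.sort_eq, Finset.sort_eq,
      Finset.insert_val_of_notMem hi]
  exact foldr_pd_perm hp hf

theorem pdSet_union {n : ℕ} {K K' : Finset (Fin n)} (h : Disjoint K K')
    {f : (Fin n → ℝ) → ℝ} (hf : ContDiff ℝ (⊤ : ℕ∞) f) :
    pdSet (K ∪ K') f = pdSet K (pdSet K' f) := by
  induction K using Finset.induction_on with
  | empty => rw [Finset.empty_union, pdSet_empty]
  | insert i K hi ih =>
    rw [Finset.disjoint_insert_left] at h
    rw [Finset.insert_union, pdSet_insert (by simp [hi, h.1]) hf,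
      pdSet_insert hi (pdSet_smooth K' hf), ih h.2]

theorem pdSet_sum {n : ℕ} (J : Finset (Fin n)) {ι : Type*} (s : Finset ι)
    (g : ι → (Fin n → ℝ) → ℝ) (hg : ∀ k ∈ s, ContDiff ℝ (⊤ : ℕ∞) (g k)) :
    pdSet J (fun y => ∑ k ∈ s, g k y) = fun y => ∑ k ∈ s, pdSet J (g k) y := by
  unfold pdSet
  induction J.sort (· ≤ ·) with
  | nil => rfl
  | cons i l ih =>
    simp only [List.foldr_cons]
    rw [ih, pd_sum i s _ fun k hk => foldr_pd_smooth l (hg k hk)]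

/-- The Leibniz rule for `∂_S`. -/
theorem pdSet_mul {n : ℕ} (S : Finset (Fin n)) {θ f : (Fin n → ℝ) → ℝ}
    (hθ : ContDiff ℝ (⊤ : ℕ∞) θ) (hf : ContDiff ℝ (⊤ : ℕ∞) f) :
    pdSet S (fun y => θ y * f y) =
      fun y => ∑ K ∈ S.powerset, pdSet K θ y * pdSet (S \ K) f y := by
  induction S using Finset.induction_on with
  | empty => simp [pdSet_empty]
  | insert i S hi ih =>
    rw [pdSet_insert hi (hθ.mul hf), ih,
      pd_sum i _ _ fun K _ => (pdSet_smooth K hθ).mul (pdSet_smooth (S \ K) hf)]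
    funext y
    rw [Finset.sum_powerset_insert hi, ← Finset.sum_add_distrib]
    refine Finset.sum_congr rfl fun K hK => ?_
    have hiK : i ∉ K := fun h => hi (Finset.mem_powerset.1 hK h)
    rw [pd_mul i (pdSet_smooth K hθ) (pdSet_smooth (S \ K) hf), pdSet_insert hiK hθ,
      Finset.insert_sdiff_of_notMem _ hiK, pdSet_insert (by simp [hi]) hf,
      Finset.insert_sdiff_insert, Finset.sdiff_insert_of_notMem hi]

/-! ### The operators `L_J` -/

theorem Lop_smooth {n : ℕ} {a : Finset (Fin n) → (Fin n → ℝ) → ℝ}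
    (ha : ∀ K, ContDiff ℝ (⊤ : ℕ∞) (a K)) (J : Finset (Fin n)) {f : (Fin n → ℝ) → ℝ}
    (hf : ContDiff ℝ (⊤ : ℕ∞) f) : ContDiff ℝ (⊤ : ℕ∞) (Lop a J f) :=
  ContDiff.sum fun K _ => (ha (J \ K)).mul (pdSet_smooth K hf)

theorem foldr_Lop_smooth {n : ℕ} {a : Finset (Fin n) → (Fin n → ℝ) → ℝ}
    (ha : ∀ K, ContDiff ℝ (⊤ : ℕ∞) (a K)) (l : List (Finset (Fin n))) {f : (Fin n → ℝ) → ℝ}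
    (hf : ContDiff ℝ (⊤ : ℕ∞) f) : ContDiff ℝ (⊤ : ℕ∞) (l.foldr (Lop a) f) := by
  induction l with
  | nil => exact hf
  | cons J l ih => exact Lop_smooth ha J ih

theorem Lop_sum {n : ℕ} (a : Finset (Fin n) → (Fin n → ℝ) → ℝ) (J : Finset (Fin n))
    {ι : Type*} (s : Finset ι) (g : ι → (Fin n → ℝ) → ℝ)
    (hg : ∀ k ∈ s, ContDiff ℝ (⊤ : ℕ∞) (g k)) (x : Fin n → ℝ) :
    Lop a J (fun y => ∑ k ∈ s, g k y) x = ∑ k ∈ s, Lop a J (g k) x := by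
  unfold Lop
  simp only [pdSet_sum _ s g hg, Finset.mul_sum]
  exact Finset.sum_comm

/-- The Leibniz rule for a single operator `L_J`. -/
theorem Lop_mul {n : ℕ} (a : Finset (Fin n) → (Fin n → ℝ) → ℝ) (J : Finset (Fin n))
    {θ f : (Fin n → ℝ) → ℝ} (hθ : ContDiff ℝ (⊤ : ℕ∞) θ) (hf : ContDiff ℝ (⊤ : ℕ∞) f)
    (x : Fin n → ℝ) :
    Lop a J (fun y => θ y * f y) x = ∑ K ∈ J.powerset, pdSet K θ x * Lop a (J \ K) f x := by
  unfold Lop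
  simp only [pdSet_mul _ hθ hf, Finset.mul_sum]
  rw [Finset.sum_sigma', Finset.sum_sigma']
  -- The pairs `K ⊆ S ⊆ J` correspond to `K ⊆ J`, `T ⊆ J \ K` through `T = S \ K`, `S = K ∪ T`.
  refine Finset.sum_bij' (fun q _ => ⟨q.2, q.1 \ q.2⟩) (fun q _ => ⟨q.1 ∪ q.2, q.1⟩)
    ?_ ?_ ?_ ?_ ?_
  · rintro ⟨S, K⟩ h
    simp only [Finset.mem_sigma, Finset.mem_powerset] at h ⊢
    exact ⟨h.2.trans h.1, Finset.sdiff_subset_sdiff h.1 le_rfl⟩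
  · rintro ⟨K, T⟩ h
    simp only [Finset.mem_sigma, Finset.mem_powerset] at h ⊢
    exact ⟨Finset.union_subset h.1 (h.2.trans Finset.sdiff_subset), Finset.subset_union_left⟩
  · rintro ⟨S, K⟩ h
    simp only [Finset.mem_sigma, Finset.mem_powerset] at h
    simp [Finset.union_sdiff_of_subset h.2]
  · rintro ⟨K, T⟩ h
    simp only [Finset.mem_sigma, Finset.mem_powerset] at h
    have hd : Disjoint K T := Finset.disjoint_of_subset_right h.2 Finset.disjoint_sdiff
    simp [Finset.union_sdiff_cancel_left hd]
  · rintro ⟨S, K⟩ h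
    simp only [Finset.mem_sigma, Finset.mem_powerset] at h
    have e : (J \ K) \ (S \ K) = J \ S := by
      rw [sdiff_sdiff_left, Finset.sup_eq_union, Finset.union_sdiff_of_subset h.2]
    simp only [e]
    ring

theorem sum_piFinset_succ {p : ℕ} {α : Type*} [DecidableEq α] (s : Fin (p + 1) → Finset α)
    (F : (Fin (p + 1) → α) → ℝ) :
    ∑ K ∈ Fintype.piFinset s, F K =
      ∑ K ∈ Fintype.piFinset (fun i : Fin p => s i.succ), ∑ k ∈ s 0,
        F (Fin.cons k K : Fin (p + 1) → α) := by
  rw [← Finset.sum_product']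
  refine Finset.sum_bij' (fun K _ => (Fin.tail K, K 0)) (fun q _ => Fin.cons q.2 q.1) ?_ ?_ ?_ ?_ ?_
  · intro K hK
    simp only [Fintype.mem_piFinset, Finset.mem_product] at hK ⊢
    exact ⟨fun i => hK i.succ, hK 0⟩
  · rintro ⟨K, k⟩ h
    simp only [Fintype.mem_piFinset, Finset.mem_product] at h ⊢
    exact Fin.cases h.2 h.1
  · intro K _
    exact Fin.cons_self_tail K
  · rintro ⟨K, k⟩ _
    simp
  · intro K _
    simp

/-- The Leibniz rule for `L_{J_1} ∘ ⋯ ∘ L_{J_p}`. -/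
theorem foldr_Lop_mul {n : ℕ} {a : Finset (Fin n) → (Fin n → ℝ) → ℝ}
    (ha : ∀ K, ContDiff ℝ (⊤ : ℕ∞) (a K)) (p : ℕ) (J : Fin p → Finset (Fin n))
    (hdisj : ∀ i j, i ≠ j → Disjoint (J i) (J j)) {θ f : (Fin n → ℝ) → ℝ}
    (hθ : ContDiff ℝ (⊤ : ℕ∞) θ) (hf : ContDiff ℝ (⊤ : ℕ∞) f) (x : Fin n → ℝ) :
    (List.ofFn J).foldr (Lop a) (fun y => θ y * f y) x =
      ∑ K ∈ Fintype.piFinset (fun i => (J i).powerset),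
        pdSet (Finset.univ.biUnion K) θ x *
          (List.ofFn fun i => J i \ K i).foldr (Lop a) f x := by
  induction p generalizing x with
  | zero => simp [pdSet_empty]
  | succ p ih =>
    have ih' := funext (ih (fun i => J i.succ)
      (fun i j hij => hdisj _ _ fun h => hij (Fin.succ_injective _ h)))
    rw [sum_piFinset_succ, List.ofFn_succ, List.foldr_cons, ih', Lop_sum]
    · refine Finset.sum_congr rfl fun K hK => ?_
      rw [Lop_mul a _ (pdSet_smooth _ hθ) (foldr_Lop_smooth ha _ hf)]
      refine Finset.sum_congr rfl fun k hk => ?_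
      have hU : Finset.univ.biUnion (Fin.cons k K : Fin (p + 1) → Finset (Fin n)) =
          k ∪ Finset.univ.biUnion K := by
        ext i
        simp [Fin.exists_fin_succ]
      have hd : Disjoint k (Finset.univ.biUnion K) := by
        rw [Finset.disjoint_biUnion_right]
        intro i _
        exact Finset.disjoint_of_subset_left (Finset.mem_powerset.1 hk)
          (Finset.disjoint_of_subset_right
            (Finset.mem_powerset.1 (Fintype.mem_piFinset.1 hK i))
            (hdisj _ _ (Fin.succ_ne_zero i).symm))
      rw [hU, pdSet_union hd hθ]
      simp [List.ofFn_succ]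
    · exact fun K _ => (pdSet_smooth _ hθ).mul (foldr_Lop_smooth ha _ hf)

open Finset in
/-- for pairwise disjoint `J_1, …, J_p`,
`(L_{J_1}∘⋯∘L_{J_p})(θ·f) − θ·(L_{J_1}∘⋯∘L_{J_p})(f)
 = Σ_{K_i ⊆ J_i, not all empty} (∂_{K_1∪⋯∪K_p} θ) · (L_{J_1∖K_1}∘⋯∘L_{J_p∖K_p})(f)`. -/
theorem laplace_theta_map_monomial {n : ℕ} (hn : 1 ≤ n)
    (a : Finset (Fin n) → (Fin n → ℝ) → ℝ)
    (ha : ∀ K, ContDiff ℝ (⊤ : ℕ∞) (a K)) (ha0 : a ∅ = fun _ => 1)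
    (p : ℕ) (J : Fin p → Finset (Fin n))
    (hdisj : ∀ i j, i ≠ j → Disjoint (J i) (J j))
    (θ f : (Fin n → ℝ) → ℝ)
    (hθ : ContDiff ℝ (⊤ : ℕ∞) θ) (hf : ContDiff ℝ (⊤ : ℕ∞) f) (x : Fin n → ℝ) :
    (List.ofFn J).foldr (Lop a) (fun y => θ y * f y) x
        - θ x * (List.ofFn J).foldr (Lop a) f x =
      ∑ K ∈ (Finset.univ : Finset (Fin p → Finset (Fin n))).filter
          (fun K => (∀ i, K i ⊆ J i) ∧ ∃ i, K i ≠ ∅),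
        pdSet (Finset.univ.biUnion K) θ x *
          (List.ofFn fun i => J i \ K i).foldr (Lop a) f x := by
  classical
  rw [foldr_Lop_mul ha p J hdisj hθ hf x]
  have hmem : (fun _ => ∅ : Fin p → Finset (Fin n)) ∈
      Fintype.piFinset (fun i => (J i).powerset) := by
    simp [Fintype.mem_piFinset]
  have hset : (Finset.univ : Finset (Fin p → Finset (Fin n))).filter
      (fun K => (∀ i, K i ⊆ J i) ∧ ∃ i, K i ≠ ∅) =
      (Fintype.piFinset (fun i => (J i).powerset)).erase (fun _ => ∅) := by
    ext K
    simp [Fintype.mem_piFinset, funext_iff, and_comm]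
  rw [hset, ← Finset.add_sum_erase _ _ hmem]
  have h0 : Finset.univ.biUnion (fun _ : Fin p => (∅ : Finset (Fin n))) = ∅ := by
    ext i
    simp
  simp only [h0, pdSet_empty, Finset.sdiff_empty]
  ring
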